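/- Fix m ≥ 1. If (i_n) and (i'_n) are two digit sequences with i_k = i'_k for all k ≤ m, with alternating Cantor series values x and x' respectively, then σ_m(x) − σ_m(x') = −q_m·(x − x'). In particular, on each cylinder set of digit sequences with fixed first m digits, σ_m is an affine function of x with slope −q_m. -/

import Mathlib

/-- `q_1 q_2 ⋯ q_n` (1-based indexing; `prodQ q 0 = 1`). -/
noncomputable def prodQ (q : ℕ → ℕ) (n : ℕ) : ℝ :=
  ∏ j ∈ Finset.Icc 1 n, (q j : ℝ)

/-- The positive Cantor series value `x = Σ_{n=1}^∞ i_n/(q_1 ⋯ q_n)`. -/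
noncomputable def cantorVal (q i : ℕ → ℕ) : ℝ :=
  ∑' n : ℕ, (i (n + 1) : ℝ) / prodQ q (n + 1)

/-- The generalized shift operator
`σ_m = Σ_{k=1}^{m-1} i_k/(q_1⋯q_k) + Σ_{l=m+1}^∞ i_l/(q_1⋯q_{m-1} q_{m+1}⋯q_l)`. -/
noncomputable def sigmaC (q i : ℕ → ℕ) (m : ℕ) : ℝ :=
  (∑ k ∈ Finset.Icc 1 (m - 1), (i k : ℝ) / prodQ q k) +
    ∑' t : ℕ, (i (m + 1 + t) : ℝ) /
      (prodQ q (m - 1) * ∏ j ∈ Finset.Icc (m + 1) (m + 1 + t), (q j : ℝ))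

/-- The `m`-fold shift `σ^m(x) = Σ_{k=m+1}^∞ i_k/(q_{m+1} ⋯ q_k)`. -/
noncomputable def shiftVal (q i : ℕ → ℕ) (m : ℕ) : ℝ :=
  ∑' t : ℕ, (i (m + 1 + t) : ℝ) / ∏ j ∈ Finset.Icc (m + 1) (m + 1 + t), (q j : ℝ)

/-- The alternating Cantor series value `x = Σ_{n=1}^∞ (-1)^n i_n/(q_1 ⋯ q_n)`. -/
noncomputable def altCantorVal (q i : ℕ → ℕ) : ℝ :=
  ∑' n : ℕ, (-1 : ℝ) ^ (n + 1) * (i (n + 1) : ℝ) / prodQ q (n + 1)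

/-- The generalized shift operator for alternating Cantor series:
`σ_m = Σ_{k=1}^{m-1} (-1)^k i_k/(q_1⋯q_k)
      + Σ_{l=m+1}^∞ (-1)^{l-1} i_l/(q_1⋯q_{m-1} q_{m+1}⋯q_l)`. -/
noncomputable def altSigma (q i : ℕ → ℕ) (m : ℕ) : ℝ :=
  (∑ k ∈ Finset.Icc 1 (m - 1), (-1 : ℝ) ^ k * (i k : ℝ) / prodQ q k) +
    ∑' t : ℕ, (-1 : ℝ) ^ (m + t) * (i (m + 1 + t) : ℝ) /
      (prodQ q (m - 1) * ∏ j ∈ Finset.Icc (m + 1) (m + 1 + t), (q j : ℝ))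

/-!
The factor `q m` sits in the denominator of every term of index greater than `m`, so deleting it
multiplies the tail of the series by `q m`, while moving each later digit one place to the left
flips its sign. Hence `altSigma q i m` is `-q m` times the tail of `altCantorVal q i` after `m`,
plus a finite sum, and the difference between the value and its tail is also a finite sum; both
finite sums involve only the first `m` digits.
-/

section Products

variable (q : ℕ → ℕ)

lemma prodQ_add (m n : ℕ) :
    prodQ q (m + n) = prodQ q m * ∏ j ∈ Finset.Icc (m + 1) (m + n), (q j : ℝ) := by
  have split := Finset.prod_Ioc_consecutive (fun j ↦ (q j : ℝ)) m.zero_le (m.le_add_right n)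
  simpa only [prodQ, ← Finset.Icc_add_one_left_eq_Ioc, zero_add] using split.symm

lemma prodQ_succ (n : ℕ) : prodQ q (n + 1) = prodQ q n * q (n + 1) :=
  Finset.prod_Icc_succ_top n.succ_pos _

variable {q}

lemma two_pow_le_prodQ (hq : ∀ n, 1 ≤ n → 2 ≤ q n) (n : ℕ) : (2 : ℝ) ^ n ≤ prodQ q n := by
  have two_le : ∀ j ∈ Finset.Icc 1 n, (2 : ℝ) ≤ q j := fun j hj ↦ by
    exact_mod_cast hq j (Finset.mem_Icc.mp hj).1
  simpa [prodQ] using Finset.prod_le_prod (fun _ _ ↦ zero_le_two) two_le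

end Products

/-- The `n`-th term `(-1)^n i_n/(q_1 ⋯ q_n)` of the alternating Cantor series, with the 1-based
indexing of `prodQ`. -/
noncomputable def altCantorTerm (q i : ℕ → ℕ) (n : ℕ) : ℝ :=
  (-1) ^ n * i n / prodQ q n

/-- The sum of the terms `1, …, n` of the alternating Cantor series. -/
noncomputable def altCantorPartialSum (q i : ℕ → ℕ) (n : ℕ) : ℝ :=
  ∑ k ∈ Finset.Icc 1 n, altCantorTerm q i k

/-- The tail of the alternating Cantor series after its `m`-th term. -/
noncomputable def altCantorTail (q i : ℕ → ℕ) (m : ℕ) : ℝ :=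
  ∑' t : ℕ, altCantorTerm q i (m + 1 + t)

section Series

variable {q i i' : ℕ → ℕ} {m : ℕ}

lemma summable_altCantorTerm (hq : ∀ n, 1 ≤ n → 2 ≤ q n) (hi : ∀ n, 1 ≤ n → i n ≤ q n) :
    Summable fun n ↦ altCantorTerm q i (n + 1) := by
  refine summable_geometric_two.of_norm_bounded fun n ↦ ?_
  have two_pow_le := two_pow_le_prodQ hq n
  have prodQ_pos : 0 < prodQ q n := (by positivity : (0 : ℝ) < 2 ^ n).trans_le two_pow_le
  have digit_le : (i (n + 1) : ℝ) / q (n + 1) ≤ 1 :=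
    div_le_one_of_le₀ (by exact_mod_cast hi (n + 1) n.succ_pos) (Nat.cast_nonneg _)
  calc ‖altCantorTerm q i (n + 1)‖
      = i (n + 1) / q (n + 1) / prodQ q n := by
        simp [altCantorTerm, prodQ_succ, abs_of_pos prodQ_pos, div_div, mul_comm]
    _ ≤ 1 / 2 ^ n := by gcongr
    _ = (1 / 2) ^ n := (one_div_pow 2 n).symm

lemma altCantorPartialSum_congr (h : ∀ k, 1 ≤ k → k ≤ m → i k = i' k) :
    altCantorPartialSum q i m = altCantorPartialSum q i' m := by
  refine Finset.sum_congr rfl fun k hk ↦ ?_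
  obtain ⟨one_le, le_m⟩ := Finset.mem_Icc.mp hk
  rw [altCantorTerm, altCantorTerm, h k one_le le_m]

lemma altCantorVal_eq_partialSum_add_tail (hs : Summable fun n ↦ altCantorTerm q i (n + 1))
    (m : ℕ) : altCantorVal q i = altCantorPartialSum q i m + altCantorTail q i m := by
  have head : ∑ n ∈ Finset.range m, altCantorTerm q i (n + 1) = altCantorPartialSum q i m := by
    rw [Finset.range_eq_Ico, Finset.sum_Ico_add' (altCantorTerm q i), zero_add,
      Finset.Ico_add_one_right_eq_Icc, altCantorPartialSum]
  have tail : ∑' t, altCantorTerm q i (t + m + 1) = altCantorTail q i m :=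
    tsum_congr fun t ↦ by rw [add_assoc, add_comm]
  rw [← head, ← tail]
  exact (hs.sum_add_tsum_nat_add m).symm

lemma altSigma_term_eq_neg_mul (hm : 1 ≤ m) (hqm : q m ≠ 0) (i : ℕ → ℕ) (t : ℕ) :
    (-1 : ℝ) ^ (m + t) * (i (m + 1 + t) : ℝ) /
        (prodQ q (m - 1) * ∏ j ∈ Finset.Icc (m + 1) (m + 1 + t), (q j : ℝ)) =
      -q m * altCantorTerm q i (m + 1 + t) := by
  have prodQ_m : prodQ q m = prodQ q (m - 1) * q m := by
    simpa only [Nat.sub_add_cancel hm] using prodQ_succ q (m - 1)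
  have hqm' : (q m : ℝ) ≠ 0 := Nat.cast_ne_zero.mpr hqm
  rw [altCantorTerm, add_assoc m 1 t, prodQ_add, prodQ_m]
  field_simp
  ring

lemma altSigma_eq_partialSum_sub_tail (hm : 1 ≤ m) (hqm : q m ≠ 0) (i : ℕ → ℕ) :
    altSigma q i m = altCantorPartialSum q i (m - 1) - q m * altCantorTail q i m := by
  rw [altSigma, tsum_congr (altSigma_term_eq_neg_mul hm hqm i), tsum_mul_left,
    neg_mul, ← sub_eq_add_neg]
  rfl

lemma altSigma_eq_affine (hm : 1 ≤ m) (hqm : q m ≠ 0)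
    (hs : Summable fun n ↦ altCantorTerm q i (n + 1)) :
    altSigma q i m = -q m * altCantorVal q i +
      (altCantorPartialSum q i (m - 1) + q m * altCantorPartialSum q i m) := by
  rw [altSigma_eq_partialSum_sub_tail hm hqm, altCantorVal_eq_partialSum_add_tail hs m]
  ring

end Series

theorem stmt_12_general (q : ℕ → ℕ) (hq : ∀ n, 1 ≤ n → q n ≠ 0) (m : ℕ) (hm : 1 ≤ m)
    (i i' : ℕ → ℕ) (hs : Summable fun n ↦ altCantorTerm q i (n + 1))
    (hs' : Summable fun n ↦ altCantorTerm q i' (n + 1))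
    (hagree : ∀ k, 1 ≤ k → k ≤ m → i k = i' k) :
    altSigma q i m - altSigma q i' m =
      -(q m : ℝ) * (altCantorVal q i - altCantorVal q i') := by
  have agree_before : ∀ k, 1 ≤ k → k ≤ m - 1 → i k = i' k :=
    fun k one_le le_pred ↦ hagree k one_le (le_pred.trans (m.sub_le 1))
  rw [altSigma_eq_affine hm (hq m hm) hs, altSigma_eq_affine hm (hq m hm) hs',
    altCantorPartialSum_congr agree_before, altCantorPartialSum_congr hagree]
  ring

theorem stmt_12 (q : ℕ → ℕ) (hq : ∀ n, 1 ≤ n → 2 ≤ q n) (m : ℕ) (hm : 1 ≤ m)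
    (i i' : ℕ → ℕ) (hi : ∀ n, 1 ≤ n → i n ≤ q n - 1) (hi' : ∀ n, 1 ≤ n → i' n ≤ q n - 1)
    (hagree : ∀ k, 1 ≤ k → k ≤ m → i k = i' k) :
    altSigma q i m - altSigma q i' m =
      -(q m : ℝ) * (altCantorVal q i - altCantorVal q i') :=
  stmt_12_general q (fun n hn ↦ Nat.ne_zero_of_lt (hq n hn)) m hm i i'
    (summable_altCantorTerm hq fun n hn ↦ (hi n hn).trans (Nat.sub_le _ 1))
    (summable_altCantorTerm hq fun n hn ↦ (hi' n hn).trans (Nat.sub_le _ 1)) hagree
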